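/- Let μ be a probability measure on a measurable space X, let κ be a Markov kernel from X to a measurable space Z (the variational posterior q_φ(Z|x)), and let p be any fixed probability measure on Z (the prior). Let the joint distribution of (X, Z) be μ ⊗ κ, and let the mutual information I(X; Z) be the Kullback–Leibler divergence of the joint distribution from the product of its two marginals. Then I(X; Z) ≤ ∫ D_KL(κ(x) ‖ p) dμ(x), i.e. the mutual information is bounded above by the expected KL divergence of the posterior from the prior. -/

import Mathlib

/-!
Write `q` for the law of `Z`, `π = μ ⊗ₘ κ` and `f = dπ/d(μ × p)`. The proof compares both sides with
the intermediate quantity `D(π ‖ μ × p)`.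

* `D(π ‖ μ × q) ≤ D(π ‖ μ × p)` (`klDiv_prod_snd_le`): the chain rule for densities gives
  `log dπ/d(μ × q) = log f - log dq/dp`, so the two sides differ by `D(q ‖ p) ≥ 0`, which is
  finite by data processing as soon as the right-hand side is.
* `D(π ‖ μ × p) ≤ ∫ D(κ x ‖ p) dμ` (`klDiv_compProd_const_le`): since `Z` is not assumed countably
  generated, `f(x, ·)` need not be a density of `κ x`, and `x ↦ D(κ x ‖ p)` need not be measurable
  (its `∫⁻` is a lower integral). The Fenchel–Young inequality for `t log t + 1 - t` gives instead
  `∫ log s(x, ·) dκ x + 1 - ∫ s(x, ·) dp ≤ D(κ x ‖ p)` for every jointly measurable `s` with values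
  in a compact subset of `(0, ∞)`, and here the left-hand side is measurable in `x`. Taking `s` to
  be `f` clamped to `[1/(n+1), n+1]`, integrating in `x` and letting `n → ∞` with Fatou's lemma yields
  the claim.
-/

open MeasureTheory ProbabilityTheory
open scoped ENNReal ProbabilityTheory

open scoped Classical in
/-- The Kullback–Leibler divergence of `μ` from `ν`, as a value in `ℝ≥0∞`.
It is the integral of the log-likelihood ratio `llr μ ν` with respect to `μ` when
`μ ≪ ν` and the log-likelihood ratio is `μ`-integrable, and `∞` otherwise.
(For probability measures this nonnegative-extended-real-valued definition agrees with
the usual KL divergence.) -/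
noncomputable def klDiv {α : Type*} [MeasurableSpace α] (μ ν : Measure α) : ℝ≥0∞ :=
  if μ ≪ ν ∧ Integrable (llr μ ν) μ then ENNReal.ofReal (∫ x, llr μ ν x ∂μ) else ⊤

/-- The mutual information of a joint law `π` on a product space: the KL divergence of `π`
from the product of its two marginals. -/
noncomputable def mutualInfo {X Z : Type*} [MeasurableSpace X] [MeasurableSpace Z]
    (π : Measure (X × Z)) : ℝ≥0∞ :=
  klDiv π ((π.map Prod.fst).prod (π.map Prod.snd))

open InformationTheory (klFun)

/-- For probability measures the divergence coincides with Mathlib's, whose correction term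
`ν univ - μ univ` vanishes. -/
lemma klDiv_eq_mathlib {α : Type*} [MeasurableSpace α] (μ ν : Measure α)
    [IsProbabilityMeasure μ] [IsProbabilityMeasure ν] :
    klDiv μ ν = InformationTheory.klDiv μ ν := by
  by_cases h : μ ≪ ν ∧ Integrable (llr μ ν) μ
  · rw [klDiv, if_pos h, InformationTheory.klDiv_of_ac_of_integrable h.1 h.2]
    simp
  · rw [klDiv, if_neg h, eq_comm, ← not_not (a := _ = _)]
    rwa [← ne_eq, InformationTheory.klDiv_ne_top_iff]

/-- The Fenchel–Young inequality for `klFun`. -/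
lemma mul_log_add_le_klFun {t s : ℝ} (ht : 0 ≤ t) (hs : 0 < s) :
    t * Real.log s + 1 - s ≤ klFun t := by
  rw [InformationTheory.klFun_apply]
  rcases ht.eq_or_lt with rfl | ht
  · simp [hs.le]
  · have h := mul_le_mul_of_nonneg_left (Real.log_le_sub_one_of_pos (div_pos hs ht)) ht.le
    rw [Real.log_div hs.ne' ht.ne', mul_sub, mul_sub, mul_div_cancel₀ _ ht.ne'] at h
    linarith

/-- The real number `t` clamped to the interval `[1/(n+1), n+1]`. -/
noncomputable def clamp (n : ℕ) (t : ℝ) : ℝ := max (1 / (n + 1 : ℝ)) (min t (n + 1))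

lemma one_div_le_clamp (n : ℕ) (t : ℝ) : 1 / (n + 1 : ℝ) ≤ clamp n t := le_max_left _ _

lemma clamp_pos (n : ℕ) (t : ℝ) : 0 < clamp n t :=
  lt_of_lt_of_le (by positivity) (one_div_le_clamp n t)

lemma one_div_le_one (n : ℕ) : 1 / (n + 1 : ℝ) ≤ 1 := by
  rw [div_le_one (by positivity)]
  linarith [(Nat.cast_nonneg n : (0 : ℝ) ≤ n)]

lemma clamp_le (n : ℕ) (t : ℝ) : clamp n t ≤ n + 1 :=
  max_le ((one_div_le_one n).trans (by linarith [(Nat.cast_nonneg n : (0 : ℝ) ≤ n)]))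
    (min_le_right _ _)

lemma measurable_clamp (n : ℕ) : Measurable (clamp n) := by
  unfold clamp
  fun_prop

/-- Clamping moves `t` towards `1`, so `t log s ≥ s log s` for `s = clamp n t`, and the integrand
of the truncated divergence dominates `klFun s ≥ 0`. This is what makes Fatou's lemma applicable. -/
lemma mul_log_clamp_nonneg (n : ℕ) (t : ℝ) :
    0 ≤ t * Real.log (clamp n t) + 1 - clamp n t := by
  have h0 := InformationTheory.klFun_nonneg (clamp_pos n t).le
  rw [InformationTheory.klFun_apply] at h0
  suffices 0 ≤ (t - clamp n t) * Real.log (clamp n t) by linarith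
  have hn := one_div_le_one n
  have hn' : (0 : ℝ) ≤ n := Nat.cast_nonneg n
  rcases le_total (clamp n t) t with h | h
  · rcases h.eq_or_lt with h | h
    · simp [h]
    · refine mul_nonneg (by linarith) (Real.log_nonneg ?_)
      by_contra! h1
      rcases le_total t (n + 1) with h2 | h2
      · rw [clamp, min_eq_left h2] at h
        linarith [le_max_right (1 / (n + 1 : ℝ)) t]
      · rw [clamp, min_eq_right h2] at h1
        linarith [le_max_right (1 / (n + 1 : ℝ)) (n + 1)]
  · rcases h.eq_or_lt with h | h
    · simp [← h]
    · refine mul_nonneg_of_nonpos_of_nonpos (by linarith)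
        (Real.log_nonpos (clamp_pos n t).le ?_)
      unfold clamp at h ⊢
      refine max_le hn ?_
      by_contra! h1
      rw [max_eq_right (hn.trans h1.le)] at h
      exact absurd h (not_lt.2 (min_le_left _ _))

lemma tendsto_mul_log_clamp {t : ℝ} (ht : 0 ≤ t) :
    Filter.Tendsto (fun n : ℕ ↦ t * Real.log (clamp n t) + 1 - clamp n t) Filter.atTop
      (nhds (klFun t)) := by
  have hlim : Filter.Tendsto (fun n : ℕ ↦ clamp n t) Filter.atTop (nhds t) := by
    have h1 : Filter.Tendsto (fun n : ℕ ↦ min t (n + 1 : ℝ)) Filter.atTop (nhds t) := by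
      refine tendsto_const_nhds.congr' ?_
      filter_upwards [Filter.eventually_ge_atTop ⌈t⌉₊] with n hn
      rw [min_eq_left]
      linarith [(Nat.ceil_le.1 hn)]
    have h2 := (tendsto_one_div_add_atTop_nhds_zero_nat (𝕜 := ℝ)).max h1
    rwa [max_eq_right ht] at h2
  rw [InformationTheory.klFun_apply]
  refine Filter.Tendsto.sub (Filter.Tendsto.add ?_ tendsto_const_nhds) hlim
  rcases ht.eq_or_lt with rfl | h
  · simp
  · exact (hlim.log h.ne').const_mul t

lemma abs_log_clamp_le (n : ℕ) (t : ℝ) : ‖Real.log (clamp n t)‖ ≤ Real.log (n + 1) := by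
  rw [Real.norm_eq_abs, abs_le]
  constructor
  · have := Real.log_le_log (by positivity) (one_div_le_clamp n t)
    rwa [one_div, Real.log_inv] at this
  · exact Real.log_le_log (clamp_pos n t) (clamp_le n t)

lemma integrable_clamp {α : Type*} [MeasurableSpace α] (ν : Measure α) [IsFiniteMeasure ν]
    (n : ℕ) {g : α → ℝ} (hg : Measurable g) : Integrable (fun a ↦ clamp n (g a)) ν := by
  refine Integrable.of_bound ((measurable_clamp n).comp hg).aestronglyMeasurable (n + 1 : ℝ)
    (ae_of_all _ fun a ↦ ?_)
  rw [Real.norm_of_nonneg (clamp_pos n _).le]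
  exact clamp_le n _

lemma integrable_log_clamp {α : Type*} [MeasurableSpace α] (ν : Measure α) [IsFiniteMeasure ν]
    (n : ℕ) {g : α → ℝ} (hg : Measurable g) :
    Integrable (fun a ↦ Real.log (clamp n (g a))) ν :=
  Integrable.of_bound ((measurable_clamp n).comp hg).log.aestronglyMeasurable (Real.log (n + 1))
    (ae_of_all _ fun _ ↦ abs_log_clamp_le n _)

/-- Change of measure for the truncated divergence integrand. -/
lemma integral_rnDeriv_mul_log_clamp {α : Type*} [MeasurableSpace α] {ν p : Measure α}
    [IsProbabilityMeasure ν] [IsProbabilityMeasure p] (hνp : ν ≪ p) (n : ℕ) {g : α → ℝ}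
    (hg : Measurable g) :
    Integrable (fun a ↦ (ν.rnDeriv p a).toReal * Real.log (clamp n (g a)) + 1 - clamp n (g a)) p ∧
    ∫ a, ((ν.rnDeriv p a).toReal * Real.log (clamp n (g a)) + 1 - clamp n (g a)) ∂p =
      ∫ a, Real.log (clamp n (g a)) ∂ν + 1 - ∫ a, clamp n (g a) ∂p := by
  have h1 : Integrable (fun a ↦ (ν.rnDeriv p a).toReal * Real.log (clamp n (g a))) p :=
    (integrable_rnDeriv_smul_iff hνp).2 (integrable_log_clamp ν n hg)
  have h2 := integrable_clamp p n hg
  have h12 : Integrable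
      (fun a ↦ (ν.rnDeriv p a).toReal * Real.log (clamp n (g a)) + 1) p :=
    h1.add (integrable_const 1)
  refine ⟨h12.sub h2, ?_⟩
  rw [integral_sub h12 h2, integral_add h1 (integrable_const 1)]
  have h3 := integral_rnDeriv_smul hνp (f := fun a ↦ Real.log (clamp n (g a)))
  simp only [smul_eq_mul] at h3
  simp [h3]

/-- A variational lower bound for the divergence, with bounded test functions. -/
lemma ofReal_clamp_le_klDiv {α : Type*} [MeasurableSpace α] (ν p : Measure α)
    [IsProbabilityMeasure ν] [IsProbabilityMeasure p] (n : ℕ) {g : α → ℝ} (hg : Measurable g) :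
    ENNReal.ofReal (∫ a, Real.log (clamp n (g a)) ∂ν + 1 - ∫ a, clamp n (g a) ∂p) ≤
      klDiv ν p := by
  by_cases h : ν ≪ p ∧ Integrable (llr ν p) ν
  · rw [klDiv, if_pos h]
    refine ENNReal.ofReal_le_ofReal ?_
    obtain ⟨h1, h2⟩ := integral_rnDeriv_mul_log_clamp h.1 n hg
    have h3 := InformationTheory.integral_klFun_rnDeriv h.1 h.2
    simp only [probReal_univ, add_sub_cancel_right] at h3
    rw [← h2, ← h3]
    exact integral_mono h1 ((InformationTheory.integrable_klFun_rnDeriv_iff h.1).2 h.2)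
      fun a ↦ mul_log_add_le_klFun ENNReal.toReal_nonneg (clamp_pos n _)
  · rw [klDiv, if_neg h]
    exact le_top

/-- If `N` is `μ × p`-null, the measurable set of `x` with `κ x N_x ≠ 0` is, up to a null set,
contained in `{D(κ x ‖ p) = ∞}`, hence null when the lower integral is finite. -/
lemma compProd_ac_of_lintegral_klDiv_ne_top {X Z : Type*} [MeasurableSpace X] [MeasurableSpace Z]
    (μ : Measure X) [IsProbabilityMeasure μ] (κ : Kernel X Z) [IsMarkovKernel κ]
    (p : Measure Z) [IsProbabilityMeasure p] (h : ∫⁻ x, klDiv (κ x) p ∂μ ≠ ∞) :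
    μ ⊗ₘ κ ≪ μ ⊗ₘ Kernel.const X p := by
  refine Measure.AbsolutelyContinuous.mk fun N hN h0 ↦ ?_
  have hκ : Measurable fun x ↦ κ x (Prod.mk x ⁻¹' N) := Kernel.measurable_kernel_prodMk_left hN
  rw [Measure.compProd_apply hN, lintegral_eq_zero_iff
    (Kernel.measurable_kernel_prodMk_left (κ := Kernel.const X p) hN)] at h0
  rw [Measure.compProd_apply hN, lintegral_eq_zero_iff hκ]
  have hle : ∫⁻ x, ∞ * κ x (Prod.mk x ⁻¹' N) ∂μ ≤ ∫⁻ x, klDiv (κ x) p ∂μ := by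
    refine lintegral_mono_ae ?_
    filter_upwards [h0] with x hx
    by_cases hx0 : κ x (Prod.mk x ⁻¹' N) = 0
    · simp [hx0]
    · rw [klDiv, if_neg fun hac ↦ hx0 (hac.1 hx)]
      exact le_top
  filter_upwards [ae_lt_top (hκ.const_mul ∞) (ne_top_of_le_ne_top h hle)] with x hx
  by_contra hx0
  exact hx.ne (ENNReal.top_mul hx0)

lemma ofReal_integral_le_lintegral {α : Type*} [MeasurableSpace α] {μ : Measure α} {h : α → ℝ}
    (hh : Integrable h μ) : ENNReal.ofReal (∫ a, h a ∂μ) ≤ ∫⁻ a, ENNReal.ofReal (h a) ∂μ := by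
  have h1 := ofReal_integral_eq_lintegral_ofReal hh.pos_part
    (ae_of_all _ fun a ↦ le_max_right _ _)
  simp only [ENNReal.ofReal_max, ENNReal.ofReal_zero, max_eq_left zero_le] at h1
  rw [← h1]
  exact ENNReal.ofReal_le_ofReal (integral_mono hh hh.pos_part fun a ↦ le_max_left _ _)

/-- The joint divergence is at most the lower integral of the fibrewise divergences. No countable
generation of `Z`, nor measurability of `x ↦ D(κ x ‖ p)`, is needed. -/
lemma klDiv_compProd_const_le {X Z : Type*} [MeasurableSpace X] [MeasurableSpace Z]
    (μ : Measure X) [IsProbabilityMeasure μ] (κ : Kernel X Z) [IsMarkovKernel κ]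
    (p : Measure Z) [IsProbabilityMeasure p] :
    klDiv (μ ⊗ₘ κ) (μ ⊗ₘ Kernel.const X p) ≤ ∫⁻ x, klDiv (κ x) p ∂μ := by
  by_cases htop : ∫⁻ x, klDiv (κ x) p ∂μ = ∞
  · simp [htop]
  have hac := compProd_ac_of_lintegral_klDiv_ne_top μ κ p htop
  rw [klDiv_eq_mathlib, InformationTheory.klDiv_eq_lintegral_klFun_of_ac hac]
  set f : X × Z → ℝ := fun z ↦ ((μ ⊗ₘ κ).rnDeriv (μ ⊗ₘ Kernel.const X p) z).toReal
  have hf : Measurable f := (Measure.measurable_rnDeriv _ _).ennreal_toReal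
  have hbound (n : ℕ) : ∫⁻ z, ENNReal.ofReal (f z * Real.log (clamp n (f z)) + 1 - clamp n (f z))
      ∂(μ ⊗ₘ Kernel.const X p) ≤ ∫⁻ x, klDiv (κ x) p ∂μ := by
    obtain ⟨h1, h2⟩ := integral_rnDeriv_mul_log_clamp hac n hf
    have hL := integrable_log_clamp (μ ⊗ₘ κ) n hf
    have hC := integrable_clamp (μ ⊗ₘ Kernel.const X p) n hf
    have hL' : Integrable (fun x ↦ ∫ z, Real.log (clamp n (f (x, z))) ∂κ x) μ := hL.integral_compProd
    have hC' : Integrable (fun x ↦ ∫ z, clamp n (f (x, z)) ∂p) μ := hC.integral_compProd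
    rw [← ofReal_integral_eq_lintegral_ofReal h1 (ae_of_all _ fun z ↦ mul_log_clamp_nonneg n _),
      h2, Measure.integral_compProd hL, Measure.integral_compProd hC]
    have hL1 : Integrable (fun x ↦ ∫ z, Real.log (clamp n (f (x, z))) ∂κ x + 1) μ :=
      hL'.add (integrable_const 1)
    have h3 : ∫ x, (∫ z, Real.log (clamp n (f (x, z))) ∂κ x + 1 - ∫ z, clamp n (f (x, z)) ∂p) ∂μ =
        ∫ x, ∫ z, Real.log (clamp n (f (x, z))) ∂κ x ∂μ + 1 -
          ∫ x, ∫ z, clamp n (f (x, z)) ∂p ∂μ := by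
      rw [integral_sub hL1 hC', integral_add hL' (integrable_const 1)]
      simp
    simp only [Kernel.const_apply]
    rw [← h3]
    refine (ofReal_integral_le_lintegral (hL1.sub hC')).trans ?_
    exact lintegral_mono fun x ↦
      ofReal_clamp_le_klDiv (κ x) p n (hf.comp measurable_prodMk_left)
  calc ∫⁻ z, ENNReal.ofReal (klFun (f z)) ∂(μ ⊗ₘ Kernel.const X p)
      = ∫⁻ z, Filter.liminf (fun n : ℕ ↦ ENNReal.ofReal
          (f z * Real.log (clamp n (f z)) + 1 - clamp n (f z))) Filter.atTop
          ∂(μ ⊗ₘ Kernel.const X p) := by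
        refine lintegral_congr fun z ↦ ?_
        exact (ENNReal.tendsto_ofReal
          (tendsto_mul_log_clamp ENNReal.toReal_nonneg)).liminf_eq.symm
    _ ≤ Filter.liminf (fun n : ℕ ↦ ∫⁻ z, ENNReal.ofReal
          (f z * Real.log (clamp n (f z)) + 1 - clamp n (f z)) ∂(μ ⊗ₘ Kernel.const X p))
          Filter.atTop := by
        refine lintegral_liminf_le fun n ↦ ?_
        have := (measurable_clamp n).comp hf
        exact (((hf.mul this.log).add_const 1).sub this).ennreal_ofReal
    _ ≤ Filter.liminf (fun _ : ℕ ↦ ∫⁻ x, klDiv (κ x) p ∂μ) Filter.atTop :=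
        Filter.liminf_le_liminf (Filter.Eventually.of_forall hbound)
    _ = ∫⁻ x, klDiv (κ x) p ∂μ := Filter.liminf_const _

/-- Among products `μ × p`, the divergence of `π` is smallest when `p` is the second marginal
of `π`. -/
lemma klDiv_prod_snd_le {X Z : Type*} [MeasurableSpace X] [MeasurableSpace Z]
    (π : Measure (X × Z)) [IsProbabilityMeasure π]
    (μ : Measure X) [IsProbabilityMeasure μ] (p : Measure Z) [IsProbabilityMeasure p] :
    klDiv π (μ.prod (π.map Prod.snd)) ≤ klDiv π (μ.prod p) := by
  by_cases h : π ≪ μ.prod p ∧ Integrable (llr π (μ.prod p)) π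
  swap
  · rw [klDiv, klDiv, if_neg h]
    exact le_top
  obtain ⟨hac, hint⟩ := h
  set q := π.map Prod.snd with hq
  have : IsProbabilityMeasure q := Measure.isProbabilityMeasure_map measurable_snd.aemeasurable
  have hsnd : (μ.prod p).map Prod.snd = p := by
    simp [Measure.map_snd_prod]
  have hqp_ne : InformationTheory.klDiv q p ≠ ∞ := by
    have h1 := InformationTheory.klDiv_map_le π (μ.prod p) (g := Prod.snd) measurable_snd
    rw [hsnd] at h1
    exact ne_top_of_le_ne_top (InformationTheory.klDiv_ne_top hac hint) h1
  obtain ⟨hqp, hqint⟩ := InformationTheory.klDiv_ne_top_iff.1 hqp_ne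
  have hρ : Measurable (q.rnDeriv p) := Measure.measurable_rnDeriv _ _
  have hρ' : Measurable fun z : X × Z ↦ q.rnDeriv p z.2 := hρ.comp measurable_snd
  have hρpos : ∀ᵐ z ∂π, 0 < q.rnDeriv p z.2 :=
    ae_of_ae_map measurable_snd.aemeasurable (Measure.rnDeriv_pos hqp)
  have hwd : μ.prod q = (μ.prod p).withDensity fun z ↦ q.rnDeriv p z.2 := by
    rw [← prod_withDensity_right hρ, Measure.withDensity_rnDeriv_eq _ _ hqp]
  have hac' : π ≪ μ.prod q := by
    refine Measure.AbsolutelyContinuous.mk fun N hN h0 ↦ ?_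
    have h1 : ∀ᵐ z ∂μ.prod q, z ∉ N := measure_eq_zero_iff_ae_notMem.1 h0
    rw [hwd, ae_withDensity_iff hρ'] at h1
    refine measure_eq_zero_iff_ae_notMem.2 ?_
    filter_upwards [hac.ae_le h1, hρpos] with z hz hz'
    exact hz hz'.ne'
  have hderiv : (μ.prod q).rnDeriv (μ.prod p) =ᵐ[μ.prod p] fun z ↦ q.rnDeriv p z.2 := by
    rw [hwd]
    exact Measure.rnDeriv_withDensity _ hρ'
  have hllr : llr π (μ.prod q) =ᵐ[π] fun z ↦ llr π (μ.prod p) z - llr q p z.2 := by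
    filter_upwards [hac.ae_le hderiv, hρpos, Measure.rnDeriv_pos hac',
      hac.ae_le (Measure.rnDeriv_mul_rnDeriv hac' (κ := μ.prod p)),
      hac'.ae_le (Measure.rnDeriv_ne_top π (μ.prod q)),
      ae_of_ae_map measurable_snd.aemeasurable (hqp.ae_le (Measure.rnDeriv_ne_top q p))]
      with z h1 h2 h3 h4 h5 h6
    rw [Pi.mul_apply, h1] at h4
    simp only [llr_def]
    rw [← h4, ENNReal.toReal_mul, Real.log_mul (ENNReal.toReal_pos h3.ne' h5).ne'
      (ENNReal.toReal_pos h2.ne' h6).ne']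
    ring
  have hqint' : Integrable (fun z : X × Z ↦ llr q p z.2) π :=
    hqint.comp_measurable measurable_snd
  have hgibbs : 0 ≤ ∫ z, llr q p z.2 ∂π := by
    have h1 := InformationTheory.integral_llr_add_sub_measure_univ_nonneg hqp hqint
    simp only [probReal_univ, add_sub_cancel_right] at h1
    rwa [hq, integral_map measurable_snd.aemeasurable
      (measurable_llr _ _).aestronglyMeasurable] at h1
  rw [klDiv, klDiv, if_pos ⟨hac', (hint.sub hqint').congr hllr.symm⟩, if_pos ⟨hac, hint⟩,
    integral_congr_ae hllr, integral_sub hint hqint']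
  exact ENNReal.ofReal_le_ofReal (by linarith)

/-- **Variational upper bound on mutual information.**
Let `μ` be a probability measure on `X`, `κ` a Markov kernel from `X` to `Z` (the variational
posterior) and `p` any fixed probability measure on `Z` (the prior).  The mutual information
of the joint law `μ ⊗ₘ κ` is bounded above by the expected KL divergence of the posterior
from the prior: `I(X; Z) ≤ ∫ D_KL(κ x ‖ p) ∂μ`. -/
theorem mutualInfo_le_integral_klDiv
    {X Z : Type*} [MeasurableSpace X] [MeasurableSpace Z]
    (μ : Measure X) [IsProbabilityMeasure μ]
    (κ : Kernel X Z) [IsMarkovKernel κ]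
    (p : Measure Z) [IsProbabilityMeasure p] :
    mutualInfo (μ ⊗ₘ κ) ≤ ∫⁻ x, klDiv (κ x) p ∂μ := by
  have hfst : (μ ⊗ₘ κ).map Prod.fst = μ := Measure.fst_compProd μ κ
  rw [mutualInfo, hfst]
  refine (klDiv_prod_snd_le (μ ⊗ₘ κ) μ p).trans ?_
  rw [← Measure.compProd_const]
  exact klDiv_compProd_const_le μ κ p
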